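/- Let a(t) be a C¹ real function on ℝ with no zeros. Then every maximal solution of the second-order ODE r'' + (b²/4) r = a(t)²/r³ with initial condition r(t₀) = r₀ > 0, r'(t₀) = r₁ is defined on all of ℝ (and stays positive). -/

import Mathlib

open Set Filter Topology Metric
open scoped NNReal

/-!
Along a solution the radial Hamiltonian `H = p² / 2 + a² / (2 r²) + b² r² / 8` satisfies
`|dH/dt| = |a a'| / r² ≤ |2 a' / a| H`, so on a bounded time interval `(r, p)` stays in a fixed
compact box inside `r > 0`. Composing the field with the retraction onto this box makes it globally
Lipschitz, so Picard–Lindelöf solves the modified equation on the whole interval; by a continuity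
argument the solution never leaves the box, hence solves the original equation. Local uniqueness
glues the solutions on larger and larger intervals.

Uniqueness takes more care, because a competitor `ρ` is only known to have a differentiable
`deriv ρ`, and `deriv ρ` has the junk value `0` wherever `ρ` is not differentiable. By Darboux's
theorem the force `t ↦ (deriv ρ)' t` has no jumps, and since the force is strictly decreasing in the
radius, neither has `ρ`. At a zero of `deriv ρ` where the force does not vanish, `deriv ρ ≠ 0`
nearby, so `ρ` is differentiable there after all. Where both vanish, `ρ` agrees with the `C¹` curve
of radii at which the force is zero. Together these make `ρ` locally Lipschitz, hence an integral of
the continuous function `deriv ρ`.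
-/

section DerivCluster

/-- A function has no jumps if each of its values is a cluster value from the left and from the
right. This is weaker than continuity and, unlike it, holds for every derivative. -/
def HasNoJumps {X : Type*} [TopologicalSpace X] (f : ℝ → X) : Prop :=
  ∀ t, MapClusterPt (f t) (𝓝[<] t) f ∧ MapClusterPt (f t) (𝓝[>] t) f

lemma exists_mem_uIoo_eq_slope {f f' : ℝ → ℝ} {x y : ℝ} (hxy : x ≠ y)
    (hf : ∀ t ∈ uIcc x y, HasDerivAt f (f' t) t) : ∃ z ∈ uIoo x y, f' z = slope f x y := by
  wlog h : x < y generalizing x y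
  · rw [uIoo_comm, slope_comm]
    exact this hxy.symm (by rwa [uIcc_comm]) (hxy.lt_or_gt.resolve_left h)
  rw [uIcc_of_lt h] at hf
  rw [uIoo_of_lt h, slope_def_field]
  exact exists_hasDerivAt_eq_slope f f' h (fun t ht => (hf t ht).continuousAt.continuousWithinAt)
    fun t ht => hf t (Ioo_subset_Icc_self ht)

lemma mapClusterPt_of_hasDerivAt {f f' : ℝ → ℝ} {s : Set ℝ} {x : ℝ} [(𝓝[s] x).NeBot]
    (hxs : x ∉ s) (hs : (insert x s).OrdConnected)
    (hf : ∀ t ∈ insert x s, HasDerivAt f (f' t) t) : MapClusterPt (f' x) (𝓝[s] x) f' := by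
  rw [mapClusterPt_iff_frequently]
  intro V hV
  have hslope : ∀ᶠ y in 𝓝[s] x, slope f x y ∈ V :=
    (hasDerivAt_iff_tendsto_slope.1 (hf x (mem_insert x s))).eventually_mem hV |>.filter_mono
      (nhdsWithin_mono x fun _ hy => ne_of_mem_of_not_mem hy hxs)
  rw [(nhdsWithin_hasBasis nhds_basis_ball s).frequently_iff]
  intro ε hε
  obtain ⟨y, ⟨hyV, hyε⟩, hys⟩ :=
    ((hslope.and (mem_nhdsWithin_of_mem_nhds (ball_mem_nhds x hε))).and self_mem_nhdsWithin).exists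
  have hxy : uIcc x y ⊆ insert x s := hs.uIcc_subset (mem_insert x s) (mem_insert_of_mem x hys)
  obtain ⟨z, hz, hfz⟩ := exists_mem_uIoo_eq_slope (ne_of_mem_of_not_mem hys hxs).symm
    fun t ht => hf t (hxy ht)
  have hzxy : z ∈ uIcc x y := uIoo_subset_uIcc_self hz
  refine ⟨z, ⟨?_, ?_⟩, hfz ▸ hyV⟩
  · exact (convex_ball x ε).ordConnected.uIcc_subset (mem_ball_self hε) hyε hzxy
  · refine mem_of_mem_insert_of_ne (hxy hzxy) ?_
    rintro rfl
    exact left_notMem_uIoo hz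

lemma hasNoJumps_of_hasDerivAt {f f' : ℝ → ℝ} (hf : ∀ t, HasDerivAt f (f' t) t) :
    HasNoJumps f' := fun t =>
  ⟨mapClusterPt_of_hasDerivAt self_notMem_Iio (Iio_insert (a := t) ▸ ordConnected_Iic)
      fun s _ => hf s,
    mapClusterPt_of_hasDerivAt self_notMem_Ioi (Ioi_insert (a := t) ▸ ordConnected_Ici)
      fun s _ => hf s⟩

lemma tendsto_of_strictAntiOn_of_tendsto {ι X Y : Type*} [LinearOrder X] [TopologicalSpace X]
    [OrderTopology X] [LinearOrder Y] [TopologicalSpace Y] [OrderClosedTopology Y]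
    {l : Filter ι} {F : ι → X → Y} {F₀ : X → Y} {φ : ι → X} {d x₀ : X}
    (hF : ∀ i, StrictAntiOn (F i) (Ioi d)) (hF₀ : StrictAntiOn F₀ (Ioi d))
    (hlim : ∀ x ∈ Ioi d, Tendsto (F · x) l (𝓝 (F₀ x))) (hφ : ∀ i, φ i ∈ Ioi d) (hx₀ : x₀ ∈ Ioi d)
    (h : Tendsto (fun i => F i (φ i)) l (𝓝 (F₀ x₀))) : Tendsto φ l (𝓝 x₀) := by
  refine tendsto_order.2 ⟨fun y hy => ?_, fun y hy => ?_⟩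
  · rcases le_or_gt y d with hyd | hyd
    · exact .of_forall fun i => hyd.trans_lt (hφ i)
    · filter_upwards [h.eventually_lt (hlim y hyd) (hF₀ hyd hx₀ hy)] with i hi
      exact ((hF i).lt_iff_gt (hφ i) hyd).1 hi
  · have hyd : y ∈ Ioi d := lt_trans hx₀ hy
    filter_upwards [(hlim y hyd).eventually_lt h (hF₀ hx₀ hyd hy)] with i hi
    exact ((hF i).lt_iff_gt hyd (hφ i)).1 hi

lemma HasNoJumps.of_strictAntiOn {X Y : Type*} [LinearOrder X] [TopologicalSpace X]
    [OrderTopology X] [LinearOrder Y] [TopologicalSpace Y] [OrderClosedTopology Y]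
    {F : ℝ → X → Y} {φ : ℝ → X} {d : X}
    (h : HasNoJumps fun t => F t (φ t)) (hF : ∀ t, StrictAntiOn (F t) (Ioi d))
    (hFc : ∀ x ∈ Ioi d, Continuous (F · x)) (hφ : ∀ t, φ t ∈ Ioi d) : HasNoJumps φ := by
  have key {t : ℝ} {l : Filter ℝ} (hl : l ≤ 𝓝 t)
      (ht : MapClusterPt (F t (φ t)) l fun s => F s (φ s)) : MapClusterPt (φ t) l φ := by
    obtain ⟨U, hU, hlim⟩ := mapClusterPt_iff_ultrafilter.1 ht
    exact mapClusterPt_iff_ultrafilter.2 ⟨U, hU, tendsto_of_strictAntiOn_of_tendsto hF (hF t)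
      (fun x hx => ((hFc x hx).tendsto t).mono_left (hU.trans hl)) hφ (hφ t) hlim⟩
  exact fun t => ⟨key nhdsWithin_le_nhds (h t).1, key nhdsWithin_le_nhds (h t).2⟩

end DerivCluster

section Lipschitz

lemma lipschitzOnWith_insert_of_mapClusterPt {X Y : Type*} [PseudoEMetricSpace X]
    [PseudoEMetricSpace Y] {f : X → Y} {s : Set X} {x : X} {K : ℝ≥0} (hf : LipschitzOnWith K f s)
    (hx : MapClusterPt (f x) (𝓝[s] x) f) : LipschitzOnWith K f (insert x s) := by
  obtain ⟨U, hU, hlim⟩ := mapClusterPt_iff_ultrafilter.1 hx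
  have hxU : Tendsto id (U : Filter X) (𝓝 x) := hU.trans nhdsWithin_le_nhds
  have hle : ∀ y ∈ s, edist (f x) (f y) ≤ K * edist x y := fun y hy =>
    le_of_tendsto_of_tendsto (hlim.edist tendsto_const_nhds)
      (ENNReal.Tendsto.const_mul (hxU.edist tendsto_const_nhds) (.inr ENNReal.coe_ne_top))
      (((eventually_mem_nhdsWithin (s := s)).filter_mono hU).mono fun z hz => hf hz hy)
  rintro y (rfl | hy) z (rfl | hz)
  · simp
  · exact hle z hz
  · rw [edist_comm, edist_comm y]
    exact hle y hy
  · exact hf hy hz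

lemma lipschitzOnWith_of_isClosed_of_gaps {Y : Type*} [PseudoMetricSpace Y] {f : ℝ → Y}
    {s K : Set ℝ} [s.OrdConnected] {C : ℝ≥0} (hK : IsClosed K)
    (hfK : LipschitzOnWith C f (s ∩ K))
    (hgap : ∀ u ∈ s, ∀ v ∈ s, Disjoint (Ioo u v) K → LipschitzOnWith C f (Icc u v)) :
    LipschitzOnWith C f s := by
  refine LipschitzOnWith.of_dist_le_mul fun x hx y hy => ?_
  wlog hxy : x ≤ y generalizing x y
  · rw [dist_comm, dist_comm x]
    exact this y hy x hx (le_of_not_ge hxy)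
  by_cases hne : (Icc x y ∩ K).Nonempty
  · have hsub : Icc x y ⊆ s := OrdConnected.out ‹_› hx hy
    have hcompact : IsCompact (Icc x y ∩ K) := isCompact_Icc.inter_right hK
    obtain ⟨u, ⟨hu, huK⟩, hu_least⟩ := hcompact.exists_isLeast hne
    obtain ⟨v, ⟨hv, hvK⟩, hv_greatest⟩ := hcompact.exists_isGreatest hne
    have huv : u ≤ v := hu_least ⟨hv, hvK⟩
    have hxu := (hgap x hx u (hsub hu) <| disjoint_left.2 fun t ht htK =>
      ht.2.not_ge (hu_least ⟨⟨ht.1.le, ht.2.le.trans hu.2⟩, htK⟩)).dist_le_mul x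
        (left_mem_Icc.2 hu.1) u (right_mem_Icc.2 hu.1)
    have hvy := (hgap v (hsub hv) y hy <| disjoint_left.2 fun t ht htK =>
      ht.1.not_ge (hv_greatest ⟨⟨hv.1.trans ht.1.le, ht.2.le⟩, htK⟩)).dist_le_mul v
        (left_mem_Icc.2 hv.2) y (right_mem_Icc.2 hv.2)
    calc dist (f x) (f y) ≤ dist (f x) (f u) + dist (f u) (f v) + dist (f v) (f y) :=
          dist_triangle4 _ _ _ _
      _ ≤ C * dist x u + C * dist u v + C * dist v y := by
          gcongr
          exact hfK.dist_le_mul u ⟨hsub hu, huK⟩ v ⟨hsub hv, hvK⟩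
      _ = C * dist x y := by
          simp only [Real.dist_eq, abs_of_nonpos (sub_nonpos.2 hu.1),
            abs_of_nonpos (sub_nonpos.2 huv), abs_of_nonpos (sub_nonpos.2 hv.2),
            abs_of_nonpos (sub_nonpos.2 hxy)]
          ring
  · have hdisj : Disjoint (Icc x y) K :=
      disjoint_iff_inter_eq_empty.2 (not_nonempty_iff_eq_empty.1 hne)
    exact (hgap x hx y hy (hdisj.mono_left Ioo_subset_Icc_self)).dist_le_mul x
      (left_mem_Icc.2 hxy) y (right_mem_Icc.2 hxy)

end Lipschitz

section Derivative

lemma hasDerivAt_of_tendsto_deriv_nhdsNE {E : Type*} [NormedAddCommGroup E] [NormedSpace ℝ E]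
    {f : ℝ → E} {x : ℝ} {e : E} (hfc : ContinuousAt f x)
    (hf : ∀ᶠ y in 𝓝[≠] x, DifferentiableAt ℝ f y)
    (he : Tendsto (deriv f) (𝓝[≠] x) (𝓝 e)) : HasDerivAt f e x := by
  have hdiff : DifferentiableOn ℝ f {y | DifferentiableAt ℝ f y} := fun y hy =>
    DifferentiableAt.differentiableWithinAt hy
  have hright := hasDerivWithinAt_Ici_of_tendsto_deriv hdiff hfc.continuousWithinAt
    (hf.filter_mono (nhdsGT_le_nhdsNE x)) (he.mono_left (nhdsGT_le_nhdsNE x))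
  have hleft := hasDerivWithinAt_Iic_of_tendsto_deriv hdiff hfc.continuousWithinAt
    (hf.filter_mono (nhdsLT_le_nhdsNE x)) (he.mono_left (nhdsLT_le_nhdsNE x))
  simpa only [Iic_union_Ici, hasDerivWithinAt_univ] using hleft.union hright

lemma hasDerivAt_deriv_of_locallyLipschitz {f : ℝ → ℝ} (hf : LocallyLipschitz f)
    (hf' : Continuous (deriv f)) (t : ℝ) : HasDerivAt f (deriv f t) t := by
  have hint : f = fun s => (∫ z in (0 : ℝ)..s, deriv f z) + f 0 := by
    funext s
    obtain ⟨L, hL⟩ := hf.locallyLipschitzOn.exists_lipschitzOnWith_of_compact (s := uIcc 0 s)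
      isCompact_uIcc
    rw [hL.absolutelyContinuousOnInterval.integral_deriv_eq_sub, sub_add_cancel]
  have h := (hf'.integral_hasStrictDerivAt 0 t).hasDerivAt.add_const (f 0)
  rwa [← hint] at h

lemma isClosed_setOf_eq_zero_and_deriv_eq_zero {E : Type*} [NormedAddCommGroup E]
    [NormedSpace ℝ E] {g g' : ℝ → E} (hg : ∀ t, HasDerivAt g (g' t) t) :
    IsClosed {t | g t = 0 ∧ g' t = 0} := by
  rw [← isOpen_compl_iff, isOpen_iff_eventually]
  intro t ht
  by_cases h0 : g t = 0
  · have hg't : g' t ≠ 0 := fun h => ht ⟨h0, h⟩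
    filter_upwards [eventually_nhdsWithin_iff.1 ((hg t).eventually_ne hg't (c := 0))] with s hs h
    rcases eq_or_ne s t with rfl | hst
    · exact hg't h.2
    · exact hs hst h.1
  · filter_upwards [(hg t).continuousAt.eventually_ne h0] with s hs h using hs h.1

end Derivative

namespace HasNoJumps

variable {E : Type*} [NormedAddCommGroup E] [NormedSpace ℝ E] {f : ℝ → E}

lemma lipschitzOnWith_Icc (hf : HasNoJumps f) {x y : ℝ} {L : ℝ≥0}
    (hd : ∀ t ∈ Ioo x y, DifferentiableAt ℝ f t) (hL : ∀ t ∈ Ioo x y, ‖deriv f t‖₊ ≤ L) :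
    LipschitzOnWith L f (Icc x y) := by
  rcases le_or_gt y x with hyx | hxy
  · intro u hu v hv
    simp [subsingleton_Icc_of_ge hyx hu hv]
  have hIoo : LipschitzOnWith L f (Ioo x y) :=
    (convex_Ioo x y).lipschitzOnWith_of_nnnorm_deriv_le hd hL
  have hIco : LipschitzOnWith L f (Ico x y) := by
    rw [← Ioo_insert_left hxy]
    refine lipschitzOnWith_insert_of_mapClusterPt hIoo ?_
    rw [nhdsWithin_Ioo_eq_nhdsGT hxy]
    exact (hf x).2
  rw [← Ico_insert_right hxy.le]
  refine lipschitzOnWith_insert_of_mapClusterPt hIco ?_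
  rw [nhdsWithin_Ico_eq_nhdsLT hxy]
  exact (hf y).1

lemma lipschitzOnWith (hf : HasNoJumps f) {s K : Set ℝ} [s.OrdConnected] (hK : IsClosed K)
    {L : ℝ≥0} (hfK : LipschitzOnWith L f (s ∩ K)) (hd : ∀ t ∈ s \ K, DifferentiableAt ℝ f t)
    (hL : ∀ t ∈ s \ K, ‖deriv f t‖₊ ≤ L) : LipschitzOnWith L f s := by
  refine lipschitzOnWith_of_isClosed_of_gaps hK hfK fun u hu v hv hdisj => ?_
  have hsub : Ioo u v ⊆ s \ K := fun t ht =>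
    ⟨OrdConnected.out ‹_› hu hv (Ioo_subset_Icc_self ht), disjoint_left.1 hdisj ht⟩
  exact hf.lipschitzOnWith_Icc (fun t ht => hd t (hsub ht)) fun t ht => hL t (hsub ht)

lemma hasDerivAt_of_tendsto_deriv (hf : HasNoJumps f) {x : ℝ} {e : E}
    (hd : ∀ᶠ y in 𝓝[≠] x, DifferentiableAt ℝ f y) (he : Tendsto (deriv f) (𝓝[≠] x) (𝓝 e)) :
    HasDerivAt f e x := by
  have hbound : ∀ᶠ y in 𝓝[≠] x, ‖deriv f y‖₊ ≤ ‖e‖₊ + 1 :=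
    (he.nnnorm.eventually_lt_const (lt_add_one _)).mono fun _ => le_of_lt
  have hnear := hd.and hbound
  rw [eventually_nhdsWithin_iff, Metric.eventually_nhds_iff_ball] at hnear
  obtain ⟨δ, hδ, hnear⟩ := hnear
  have : (ball x δ).OrdConnected := (convex_ball x δ).ordConnected
  have hlip : LipschitzOnWith (‖e‖₊ + 1) f (ball x δ) :=
    hf.lipschitzOnWith isClosed_singleton
      (by
        rintro y ⟨-, rfl⟩ z ⟨-, rfl⟩
        simp)
      (fun y hy => (hnear y hy.1 hy.2).1) fun y hy => (hnear y hy.1 hy.2).2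
  exact hasDerivAt_of_tendsto_deriv_nhdsNE
    (hlip.continuousOn.continuousAt (ball_mem_nhds x hδ)) hd he

lemma differentiableAt_of_hasDerivAt_deriv (hf : HasNoJumps f) {t : ℝ} {k : E}
    (hf' : HasDerivAt (deriv f) k t) (hk : ¬(deriv f t = 0 ∧ k = 0)) : DifferentiableAt ℝ f t := by
  by_cases h0 : deriv f t = 0
  · have hne : ∀ᶠ s in 𝓝[≠] t, deriv f s ≠ 0 := hf'.eventually_ne fun h => hk ⟨h0, h⟩
    exact (hf.hasDerivAt_of_tendsto_deriv
      (hne.mono fun s hs => differentiableAt_of_deriv_ne_zero hs)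
      (hf'.continuousAt.tendsto.mono_left nhdsWithin_le_nhds)).differentiableAt
  · exact differentiableAt_of_deriv_ne_zero h0

lemma locallyLipschitz {f'' c : ℝ → E} (hf : HasNoJumps f)
    (hf'' : ∀ t, HasDerivAt (deriv f) (f'' t) t) (hc : LocallyLipschitz c)
    (hfc : ∀ t, f'' t = 0 → f t = c t) : LocallyLipschitz f := by
  intro t
  obtain ⟨C, V, hV, hCV⟩ := hc t
  have hbound : ∀ᶠ s in 𝓝 t, ‖deriv f s‖₊ ≤ ‖deriv f t‖₊ + 1 :=
    ((hf'' t).continuousAt.nnnorm.eventually_lt_const (lt_add_one _)).mono fun _ => le_of_lt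
  obtain ⟨δ, hδ, hball⟩ := Metric.eventually_nhds_iff_ball.1 (hbound.and hV)
  have : (ball t δ).OrdConnected := (convex_ball t δ).ordConnected
  refine ⟨max C (‖deriv f t‖₊ + 1), ball t δ, ball_mem_nhds t hδ,
    hf.lipschitzOnWith (isClosed_setOf_eq_zero_and_deriv_eq_zero hf'') ?_
      (fun s hs => hf.differentiableAt_of_hasDerivAt_deriv (hf'' s) hs.2)
      fun s hs => (hball s hs.1).1.trans (le_max_right _ _)⟩
  rintro x ⟨hx, -, hx0⟩ y ⟨hy, -, hy0⟩
  rw [hfc x hx0, hfc y hy0]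
  exact (hCV.weaken (le_max_left _ _)) (hball x hx).2 (hball y hy).2

lemma hasDerivAt_deriv {f f'' c : ℝ → ℝ} (hf : HasNoJumps f)
    (hf'' : ∀ t, HasDerivAt (deriv f) (f'' t) t) (hc : LocallyLipschitz c)
    (hfc : ∀ t, f'' t = 0 → f t = c t) (t : ℝ) : HasDerivAt f (deriv f t) t :=
  hasDerivAt_deriv_of_locallyLipschitz (hf.locallyLipschitz hf'' hc hfc)
    (continuous_iff_continuousAt.2 fun s => (hf'' s).continuousAt) t

end HasNoJumps

lemma mapsTo_ball_of_continuityMethod {X Y : Type*} [NormedAddCommGroup X] [NormedSpace ℝ X]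
    [ProperSpace X] [TopologicalSpace Y] {f : X → Y} {x₀ : X} {T : ℝ} {U S : Set Y}
    (hf : ContinuousOn f (ball x₀ T)) (hU : IsOpen U) (hS : IsClosed S) (hUS : U ⊆ S)
    (hx₀ : f x₀ ∈ U)
    (hstep : ∀ δ < T, MapsTo f (closedBall x₀ δ) S → MapsTo f (closedBall x₀ δ) U) :
    MapsTo f (ball x₀ T) U := by
  by_contra hexit
  simp only [MapsTo, not_forall] at hexit
  obtain ⟨x₁, hx₁, hx₁U⟩ := hexit
  have hx₁T : closedBall x₀ (dist x₁ x₀) ⊆ ball x₀ T := closedBall_subset_ball hx₁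
  have hcompact : IsCompact (closedBall x₀ (dist x₁ x₀) ∩ f ⁻¹' Uᶜ) :=
    (isCompact_closedBall _ _).of_isClosed_subset
      ((hf.mono hx₁T).preimage_isClosed_of_isClosed isClosed_closedBall hU.isClosed_compl)
      inter_subset_left
  obtain ⟨x₂, ⟨hx₂, hx₂U⟩, hx₂min⟩ := hcompact.exists_isMinOn
    ⟨x₁, mem_closedBall.2 le_rfl, hx₁U⟩ (f := (dist · x₀)) (by fun_prop)
  have hball : MapsTo f (ball x₀ (dist x₂ x₀)) U := fun x hx => by
    by_contra hxU
    exact (mem_ball.1 hx).not_ge (hx₂min ⟨(mem_ball.1 hx).le.trans hx₂, hxU⟩)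
  have hne : dist x₂ x₀ ≠ 0 := fun h => hx₂U (dist_eq_zero.1 h ▸ hx₀)
  have hclosedBall : MapsTo f (closedBall x₀ (dist x₂ x₀)) S := by
    rw [← closure_ball x₀ hne]
    refine ((hball.mono_right hUS).closure_of_continuousOn ?_).mono_right hS.closure_subset
    rw [closure_ball x₀ hne]
    exact hf.mono ((closedBall_subset_closedBall hx₂).trans hx₁T)
  exact hx₂U (hstep _ (mem_ball.1 (hx₁T hx₂)) hclosedBall (mem_closedBall.2 le_rfl))

section ODE

variable {E : Type*} [NormedAddCommGroup E] [NormedSpace ℝ E]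

lemma eventuallyEq_of_hasDerivAt_of_contDiffAt {v : ℝ → E → E} {f g : ℝ → E} {t : ℝ}
    (hv : ContDiffAt ℝ 1 (Function.uncurry v) (t, f t))
    (hf : ∀ᶠ s in 𝓝 t, HasDerivAt f (v s (f s)) s) (hg : ∀ᶠ s in 𝓝 t, HasDerivAt g (v s (g s)) s)
    (hfg : f t = g t) : f =ᶠ[𝓝 t] g := by
  obtain ⟨K, V, hV, hK⟩ := hv.exists_lipschitzOnWith
  have hgraph {h : ℝ → E} (hh : ∀ᶠ s in 𝓝 t, HasDerivAt h (v s (h s)) s) (ht : h t = f t) :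
      ∀ᶠ s in 𝓝 t, HasDerivAt h (v s (h s)) s ∧ h s ∈ Prod.mk s ⁻¹' V := by
    refine hh.and ((continuousAt_id.prodMk hh.self_of_nhds.continuousAt).eventually_mem ?_)
    rwa [ht]
  have hlip : ∀ᶠ s in 𝓝 t, LipschitzOnWith K (v s) (Prod.mk s ⁻¹' V) := .of_forall fun s => by
    simpa using! hK.comp (LipschitzWith.prodMk_left s).lipschitzOnWith (mapsTo_preimage _ V)
  exact ODE_solution_unique_of_eventually hlip (hgraph hf rfl) (hgraph hg hfg.symm) hfg

lemma eqOn_of_hasDerivAt_of_contDiffAt {v : ℝ → E → E} {f g : ℝ → E} {s : Set ℝ} {t₀ : ℝ}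
    (hso : IsOpen s) (hsc : IsPreconnected s)
    (hv : ∀ t ∈ s, ContDiffAt ℝ 1 (Function.uncurry v) (t, f t))
    (hf : ∀ t ∈ s, HasDerivAt f (v t (f t)) t) (hg : ∀ t ∈ s, HasDerivAt g (v t (g t)) t)
    (ht₀ : t₀ ∈ s) (hfg : f t₀ = g t₀) : EqOn f g s := by
  have hlocal {t : ℝ} (ht : t ∈ s) (heq : f t = g t) : f =ᶠ[𝓝 t] g :=
    eventuallyEq_of_hasDerivAt_of_contDiffAt (hv t ht)
      ((hso.eventually_mem ht).mono hf) ((hso.eventually_mem ht).mono hg) heq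
  have hsub : s ⊆ {t | f =ᶠ[𝓝 t] g} := by
    refine hsc.subset_of_closure_inter_subset isOpen_setOfPred_eventually_nhds
      ⟨t₀, ht₀, hlocal ht₀ hfg⟩ fun t ⟨htcl, hts⟩ => hlocal hts ?_
    have hfreq : ∃ᶠ τ in 𝓝 t, f τ = g τ :=
      (mem_closure_iff_frequently.1 htcl).mono fun τ hτ => hτ.self_of_nhds
    exact tendsto_nhds_unique_of_frequently_eq (hf t hts).continuousAt (hg t hts).continuousAt hfreq
  exact fun t ht => (hsub ht).self_of_nhds

lemma exists_hasDerivAt_ball_of_lipschitzWith_of_norm_le [CompleteSpace E] {v : ℝ → E → E}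
    {K L : ℝ≥0} {t₀ T : ℝ} (hT : 0 ≤ T) (hlip : ∀ t ∈ closedBall t₀ T, LipschitzWith K (v t))
    (hcont : ∀ x, ContinuousOn (v · x) (closedBall t₀ T))
    (hL : ∀ t ∈ closedBall t₀ T, ∀ x, ‖v t x‖ ≤ L) (x₀ : E) :
    ∃ f : ℝ → E, f t₀ = x₀ ∧ ∀ t ∈ ball t₀ T, HasDerivAt f (v t (f t)) t := by
  rw [Real.closedBall_eq_Icc] at hlip hcont hL
  rw [Real.ball_eq_Ioo]
  have hpl : IsPicardLindelof v (tmin := t₀ - T) (tmax := t₀ + T)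
      ⟨t₀, by constructor <;> linarith⟩ x₀ (L * T.toNNReal) 0 L K :=
    { lipschitzOnWith := fun t ht => (hlip t ht).lipschitzOnWith
      continuousOn := fun x _ => hcont x
      norm_le := fun t ht x _ => hL t ht x
      mul_max_le := by simp [hT] }
  obtain ⟨f, hf₀, hf⟩ := hpl.exists_eq_forall_mem_Icc_hasDerivWithinAt₀
  exact ⟨f, hf₀, fun t ht => (hf t (Ioo_subset_Icc_self ht)).hasDerivAt (Icc_mem_nhds ht.1 ht.2)⟩

lemma exists_forall_lipschitzOnWith_of_contDiffOn {v : ℝ → E → E} {I : Set ℝ} {S : Set E}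
    (hv : ContDiffOn ℝ 1 (Function.uncurry v) (I ×ˢ S)) (hIc : IsCompact I) (hI : Convex ℝ I)
    (hSc : IsCompact S) (hS : Convex ℝ S) : ∃ K, ∀ t ∈ I, LipschitzOnWith K (v t) S := by
  obtain ⟨K, hK⟩ := hv.exists_lipschitzOnWith one_ne_zero (hI.prod hS) (hIc.prod hSc)
  refine ⟨K, fun t ht => ?_⟩
  simpa using! hK.comp (LipschitzWith.prodMk_left t).lipschitzOnWith fun x hx => ⟨ht, hx⟩

theorem exists_hasDerivAt_ball_of_aprioriBound [CompleteSpace E] {v : ℝ → E → E} {t₀ T : ℝ}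
    {S U : Set E} {π : E → E} {C : ℝ≥0} {x₀ : E} (hT : 0 ≤ T)
    (hv : ContDiffOn ℝ 1 (Function.uncurry v) (closedBall t₀ T ×ˢ S)) (hSc : IsCompact S)
    (hS : Convex ℝ S) (hπ : LipschitzWith C π) (hπS : ∀ x, π x ∈ S) (hπ_id : EqOn π id S)
    (hU : IsOpen U) (hUS : U ⊆ S) (hx₀ : x₀ ∈ U)
    (hapriori : ∀ f : ℝ → E, f t₀ = x₀ → ∀ δ < T, MapsTo f (closedBall t₀ δ) S →
      (∀ t ∈ closedBall t₀ δ, HasDerivAt f (v t (f t)) t) → MapsTo f (closedBall t₀ δ) U) :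
    ∃ f : ℝ → E, f t₀ = x₀ ∧ MapsTo f (ball t₀ T) U ∧
      ∀ t ∈ ball t₀ T, HasDerivAt f (v t (f t)) t := by
  have hI : IsCompact (closedBall t₀ T) := isCompact_closedBall t₀ T
  obtain ⟨K, hK⟩ := exists_forall_lipschitzOnWith_of_contDiffOn hv hI (convex_closedBall t₀ T)
    hSc hS
  obtain ⟨L, hL⟩ := (hI.prod hSc).exists_bound_of_continuousOn hv.continuousOn
  obtain ⟨f, hf₀, hf⟩ := exists_hasDerivAt_ball_of_lipschitzWith_of_norm_le hT
    (v := fun t x => v t (π x)) (K := K * C) (L := L.toNNReal) (x₀ := x₀)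
    (fun t ht => lipschitzOnWith_univ.1 <|
      (hK t ht).comp hπ.lipschitzOnWith fun x _ => hπS x)
    (fun x => hv.continuousOn.comp (f := fun t => (t, π x)) (by fun_prop)
      fun t ht => ⟨ht, hπS x⟩)
    (fun t ht x => (hL (t, π x) ⟨ht, hπS x⟩).trans (Real.le_coe_toNNReal L))
  have hsol {t : ℝ} (ht : t ∈ ball t₀ T) (hft : f t ∈ S) : HasDerivAt f (v t (f t)) t := by
    simpa only [hπ_id hft, id_eq] using hf t ht
  have hfU : MapsTo f (ball t₀ T) U :=
    mapsTo_ball_of_continuityMethod (fun t ht => (hf t ht).continuousAt.continuousWithinAt) hU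
      hSc.isClosed hUS (hf₀ ▸ hx₀) fun δ hδ hfS => hapriori f hf₀ δ hδ hfS fun t ht =>
        hsol (closedBall_subset_ball hδ ht) (hfS ht)
  exact ⟨f, hf₀, hfU, fun t ht => hsol ht (hUS (hfU ht))⟩

theorem exists_forall_hasDerivAt_of_forall_ball {v : ℝ → E → E} {t₀ : ℝ} {x₀ : E} {Ω : Set E}
    (hv : ∀ t, ∀ x ∈ Ω, ContDiffAt ℝ 1 (Function.uncurry v) (t, x))
    (hex : ∀ T > 0, ∃ f : ℝ → E, f t₀ = x₀ ∧ MapsTo f (ball t₀ T) Ω ∧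
      ∀ t ∈ ball t₀ T, HasDerivAt f (v t (f t)) t) :
    ∃ f : ℝ → E, f t₀ = x₀ ∧ ∀ t, f t ∈ Ω ∧ HasDerivAt f (v t (f t)) t := by
  choose! f hf₀ hfΩ hf using hex
  have hagree {S T : ℝ} (hST : S ≤ T) {t : ℝ} (ht : t ∈ ball t₀ S) : f S t = f T t := by
    have hS : 0 < S := pos_of_mem_ball ht
    have hsub : ball t₀ S ⊆ ball t₀ T := ball_subset_ball hST
    exact eqOn_of_hasDerivAt_of_contDiffAt isOpen_ball (convex_ball t₀ S).isPreconnected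
      (fun s hs => hv s _ (hfΩ S hS hs)) (hf S hS) (fun s hs => hf T (hS.trans_le hST) s (hsub hs))
      (mem_ball_self hS) ((hf₀ S hS).trans (hf₀ T (hS.trans_le hST)).symm) ht
  have hmem (t : ℝ) : t ∈ ball t₀ (dist t t₀ + 1) := lt_add_one (dist t t₀)
  have hpos (t : ℝ) : 0 < dist t t₀ + 1 := by positivity
  have hglue (t : ℝ) : (fun s => f (dist s t₀ + 1) s) =ᶠ[𝓝 t] f (dist t t₀ + 1) := by
    filter_upwards [isOpen_ball.mem_nhds (hmem t)] with s hs
    rcases le_total (dist s t₀ + 1) (dist t t₀ + 1) with h | h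
    · exact hagree h (hmem s)
    · exact (hagree h hs).symm
  exact ⟨fun s => f (dist s t₀ + 1) s, hf₀ _ (hpos t₀), fun t =>
    ⟨hfΩ _ (hpos t) (hmem t), (hf _ (hpos t) t (hmem t)).congr_of_eventuallyEq (hglue t)⟩⟩

end ODE

section Energy

/-- The right-hand side of the radial equation `r'' = a² / r³ - b² / 4 * r`, where `α = a²`. -/
noncomputable def radialForce (b α r : ℝ) : ℝ := α / r ^ 3 - b ^ 2 / 4 * r

/-- The radial Hamiltonian `p² / 2 + a² / (2 r²) + b² r² / 8`, where `α = a²`. -/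
noncomputable def radialEnergy (b α r p : ℝ) : ℝ :=
  p ^ 2 / 2 + α / (2 * r ^ 2) + b ^ 2 * r ^ 2 / 8

/-- The Hamiltonian vector field `(r, p) ↦ (∂H/∂p, -∂H/∂r)` of the radial Hamiltonian. -/
noncomputable def radialField (a : ℝ → ℝ) (b t : ℝ) (x : ℝ × ℝ) : ℝ × ℝ :=
  (x.2, radialForce b (a t ^ 2) x.1)

lemma hasDerivAt_radialEnergy {a : ℝ → ℝ} {f : ℝ → ℝ × ℝ} {b t a' : ℝ} (ha : HasDerivAt a a' t)
    (hr : (f t).1 ≠ 0) (hf : HasDerivAt f (radialField a b t (f t)) t) :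
    HasDerivAt (fun s => radialEnergy b (a s ^ 2) (f s).1 (f s).2) (a t * a' / (f t).1 ^ 2) t := by
  have hr' : HasDerivAt (fun s => (f s).1) (f t).2 t := hf.fst
  have hp' : HasDerivAt (fun s => (f s).2) (a t ^ 2 / (f t).1 ^ 3 - b ^ 2 / 4 * (f t).1) t := hf.snd
  have hkinetic := (hp'.pow 2).div_const 2
  have hcentrifugal := (ha.pow 2).div ((hr'.pow 2).const_mul 2) (by simpa using! hr)
  have hharmonic := ((hr'.pow 2).const_mul (b ^ 2)).div_const 8
  unfold radialEnergy
  convert! (hkinetic.add hcentrifugal).add hharmonic using 1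
  simp only [Pi.pow_apply]
  field_simp
  ring

lemma radialEnergy_pos {b α r p : ℝ} (hα : 0 < α) (hr : r ≠ 0) : 0 < radialEnergy b α r p := by
  unfold radialEnergy
  positivity

lemma abs_mul_div_sq_le_mul_radialEnergy {a : ℝ} (ha : a ≠ 0) (a' b r p : ℝ) :
    |a * a' / r ^ 2| ≤ |2 * a' / a| * radialEnergy b (a ^ 2) r p := by
  calc |a * a' / r ^ 2| = |2 * a' / a * (a ^ 2 / (2 * r ^ 2))| := by
        congr 1
        field_simp
    _ = |2 * a' / a| * (a ^ 2 / (2 * r ^ 2)) := by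
        rw [abs_mul, abs_of_nonneg (by positivity : 0 ≤ a ^ 2 / (2 * r ^ 2))]
    _ ≤ |2 * a' / a| * radialEnergy b (a ^ 2) r p := by
        unfold radialEnergy
        gcongr
        linarith [show 0 ≤ p ^ 2 / 2 by positivity, show 0 ≤ b ^ 2 * r ^ 2 / 8 by positivity]

lemma le_exp_mul_of_abs_deriv_le {H H' : ℝ → ℝ} {s : Set ℝ} {C x y : ℝ} (hs : Convex ℝ s)
    (hH : ∀ t ∈ s, HasDerivWithinAt H (H' t) s t) (hpos : ∀ t ∈ s, 0 < H t)
    (hC : ∀ t ∈ s, |H' t| ≤ C * H t) (hx : x ∈ s) (hy : y ∈ s) :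
    H y ≤ Real.exp (C * dist y x) * H x := by
  have hlog : ‖Real.log (H y) - Real.log (H x)‖ ≤ C * ‖y - x‖ :=
    hs.norm_image_sub_le_of_norm_hasDerivWithin_le (f := fun t => Real.log (H t))
      (fun t ht => (hH t ht).log (hpos t ht).ne')
      (fun t ht => by
        rw [Real.norm_eq_abs, abs_div, abs_of_pos (hpos t ht), div_le_iff₀ (hpos t ht)]
        exact hC t ht) hx hy
  calc H y = Real.exp (Real.log (H y)) := (Real.exp_log (hpos y hy)).symm
    _ ≤ Real.exp (C * dist y x + Real.log (H x)) := by
        rw [dist_eq_norm]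
        gcongr
        linarith [(le_abs_self _).trans hlog]
    _ = Real.exp (C * dist y x) * H x := by rw [Real.exp_add, Real.exp_log (hpos x hx)]

lemma radialEnergy_le_exp_mul {a a' : ℝ → ℝ} {b C x y : ℝ} {f : ℝ → ℝ × ℝ} {s : Set ℝ}
    (hs : Convex ℝ s) (ha : ∀ t ∈ s, HasDerivAt a (a' t) t) (ha0 : ∀ t ∈ s, a t ≠ 0)
    (hC : ∀ t ∈ s, |2 * a' t / a t| ≤ C) (hr : ∀ t ∈ s, (f t).1 ≠ 0)
    (hf : ∀ t ∈ s, HasDerivAt f (radialField a b t (f t)) t) (hx : x ∈ s) (hy : y ∈ s) :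
    radialEnergy b (a y ^ 2) (f y).1 (f y).2 ≤
      Real.exp (C * dist y x) * radialEnergy b (a x ^ 2) (f x).1 (f x).2 := by
  have hpos : ∀ t ∈ s, 0 < radialEnergy b (a t ^ 2) (f t).1 (f t).2 := fun t ht =>
    radialEnergy_pos (sq_pos_of_ne_zero (ha0 t ht)) (hr t ht)
  refine le_exp_mul_of_abs_deriv_le (H := fun t => radialEnergy b (a t ^ 2) (f t).1 (f t).2) hs
    (fun t ht => (hasDerivAt_radialEnergy (ha t ht) (hr t ht) (hf t ht)).hasDerivWithinAt)
    hpos (fun t ht => ?_) hx hy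
  exact (abs_mul_div_sq_le_mul_radialEnergy (ha0 t ht) _ b _ _).trans
    (mul_le_mul_of_nonneg_right (hC t ht) (hpos t ht).le)

lemma exists_box_of_radialEnergy_le {b A E : ℝ} (hb : b ≠ 0) (hA : 0 < A) (hE : 0 ≤ E) :
    ∃ m M P : ℝ, 0 < m ∧ ∀ α r p : ℝ, A ≤ α → 0 < r → radialEnergy b α r p ≤ E →
      r ∈ Ioo m M ∧ p ∈ Ioo (-P) P := by
  refine ⟨√(A / (2 * E + 1)), √((8 * E + 1) / b ^ 2), √(2 * E + 1), by positivity, ?_⟩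
  intro α r p hα hr h
  have hα0 : 0 < α := hA.trans_le hα
  have hkinetic : 0 ≤ p ^ 2 / 2 := by positivity
  have hcentrifugal : 0 ≤ α / (2 * r ^ 2) := by positivity
  have hharmonic : 0 ≤ b ^ 2 * r ^ 2 / 8 := by positivity
  unfold radialEnergy at h
  refine ⟨⟨?_, ?_⟩, abs_lt.1 (Real.lt_sqrt_of_sq_lt ?_)⟩
  · have hαE : α ≤ E * (2 * r ^ 2) := (div_le_iff₀ (by positivity)).1 (by linarith)
    rw [Real.sqrt_lt' hr, div_lt_iff₀ (by positivity)]
    linarith [show 0 < r ^ 2 by positivity]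
  · apply Real.lt_sqrt_of_sq_lt
    rw [lt_div_iff₀ (by positivity)]
    linarith
  · rw [sq_abs]
    linarith

end Energy

section Existence

lemma contDiffAt_uncurry_radialField {a : ℝ → ℝ} {n : WithTop ℕ∞} (ha : ContDiff ℝ n a) (b t : ℝ)
    {x : ℝ × ℝ} (hx : x.1 ≠ 0) : ContDiffAt ℝ n (Function.uncurry (radialField a b)) (t, x) := by
  unfold radialField radialForce Function.uncurry
  fun_prop (disch := simpa using! hx)

lemma exists_lipschitzWith_retraction_Icc_prod_Icc {a b c d : ℝ} (hab : a ≤ b) (hcd : c ≤ d) :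
    ∃ π : ℝ × ℝ → ℝ × ℝ, LipschitzWith 1 π ∧ (∀ x, π x ∈ Icc a b ×ˢ Icc c d) ∧
      EqOn π id (Icc a b ×ˢ Icc c d) := by
  refine ⟨fun x => (projIcc a b hab x.1, projIcc c d hcd x.2), ?_,
    fun x => ⟨(projIcc a b hab x.1).2, (projIcc c d hcd x.2).2⟩, fun x hx => ?_⟩
  · have hproj {u v : ℝ} (huv : u ≤ v) : LipschitzWith 1 fun s => (projIcc u v huv s : ℝ) :=
      mul_one (1 : ℝ≥0) ▸ (LipschitzWith.subtype_val _).comp (LipschitzWith.projIcc huv)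
    simpa using! ((hproj hab).comp LipschitzWith.prod_fst).prodMk
      ((hproj hcd).comp LipschitzWith.prod_snd)
  · simp [projIcc_of_mem _ hx.1, projIcc_of_mem _ hx.2]

variable {a : ℝ → ℝ} {b : ℝ}

lemma exists_box_of_radialSolution (ha : ContDiff ℝ 1 a) (ha0 : ∀ t, a t ≠ 0) (hb : b ≠ 0)
    (t₀ : ℝ) {x₀ : ℝ × ℝ} (hx₀ : 0 < x₀.1) {T : ℝ} (hT : 0 ≤ T) :
    ∃ m M P : ℝ, 0 < m ∧ x₀ ∈ Ioo m M ×ˢ Ioo (-P) P ∧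
      ∀ f : ℝ → ℝ × ℝ, f t₀ = x₀ → ∀ δ ≤ T, (∀ t ∈ closedBall t₀ δ, 0 < (f t).1) →
        (∀ t ∈ closedBall t₀ δ, HasDerivAt f (radialField a b t (f t)) t) →
        MapsTo f (closedBall t₀ δ) (Ioo m M ×ˢ Ioo (-P) P) := by
  have hI : IsCompact (closedBall t₀ T) := isCompact_closedBall t₀ T
  have ht₀ : t₀ ∈ closedBall t₀ T := mem_closedBall_self hT
  have hrate : Continuous fun t => 2 * deriv a t / a t :=
    ((ha.continuous_deriv le_rfl).const_mul 2).div ha.continuous ha0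
  obtain ⟨C, hC⟩ := hI.exists_bound_of_continuousOn hrate.continuousOn
  obtain ⟨A, hA, hAα⟩ := hI.exists_forall_le' (ha.continuous.pow 2).continuousOn
    fun t _ => sq_pos_of_ne_zero (ha0 t)
  have hC0 : 0 ≤ C := (norm_nonneg _).trans (hC t₀ ht₀)
  set E₀ := radialEnergy b (a t₀ ^ 2) x₀.1 x₀.2
  have hE₀ : 0 < E₀ := radialEnergy_pos (sq_pos_of_ne_zero (ha0 t₀)) hx₀.ne'
  obtain ⟨m, M, P, hm, hbox⟩ := exists_box_of_radialEnergy_le (E := Real.exp (C * T) * E₀) hb hA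
    (by positivity)
  refine ⟨m, M, P, hm, hbox _ _ _ (hAα t₀ ht₀) hx₀
    (le_mul_of_one_le_left hE₀.le (Real.one_le_exp (by positivity))), ?_⟩
  intro f hf₀ δ hδ hpos hf t ht
  have hδT : closedBall t₀ δ ⊆ closedBall t₀ T := closedBall_subset_closedBall hδ
  have hE := radialEnergy_le_exp_mul (convex_closedBall t₀ δ)
    (fun s _ => (ha.differentiable one_ne_zero s).hasDerivAt) (fun s _ => ha0 s)
    (fun s hs => hC s (hδT hs)) (fun s hs => (hpos s hs).ne') hf
    (mem_closedBall_self (dist_nonneg.trans ht)) ht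
  rw [hf₀] at hE
  refine hbox _ _ _ (hAα t (hδT ht)) (hpos t ht) (hE.trans ?_)
  gcongr
  exact hδT ht

lemma exists_radialSolution_ball (ha : ContDiff ℝ 1 a) (ha0 : ∀ t, a t ≠ 0) (hb : b ≠ 0)
    (t₀ : ℝ) {x₀ : ℝ × ℝ} (hx₀ : 0 < x₀.1) {T : ℝ} (hT : 0 ≤ T) :
    ∃ f : ℝ → ℝ × ℝ, f t₀ = x₀ ∧ MapsTo f (ball t₀ T) {x | 0 < x.1} ∧
      ∀ t ∈ ball t₀ T, HasDerivAt f (radialField a b t (f t)) t := by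
  obtain ⟨m, M, P, hm, hx₀box, hapriori⟩ := exists_box_of_radialSolution ha ha0 hb t₀ hx₀ hT
  obtain ⟨π, hπ, hπbox, hπid⟩ := exists_lipschitzWith_retraction_Icc_prod_Icc
    (hx₀box.1.1.trans hx₀box.1.2).le (hx₀box.2.1.trans hx₀box.2.2).le
  have hpos {x : ℝ × ℝ} (hx : x ∈ Icc m M ×ˢ Icc (-P) P) : 0 < x.1 := hm.trans_le hx.1.1
  have hsub : Ioo m M ×ˢ Ioo (-P) P ⊆ Icc m M ×ˢ Icc (-P) P :=
    prod_mono Ioo_subset_Icc_self Ioo_subset_Icc_self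
  obtain ⟨f, hf₀, hfbox, hf⟩ := exists_hasDerivAt_ball_of_aprioriBound (v := radialField a b) hT
    (fun x hx => (contDiffAt_uncurry_radialField ha b x.1 (hpos hx.2).ne').contDiffWithinAt)
    (isCompact_Icc.prod isCompact_Icc) ((convex_Icc m M).prod (convex_Icc (-P) P)) hπ hπbox hπid
    (isOpen_Ioo.prod isOpen_Ioo) hsub hx₀box
    fun f hf₀ δ hδ hfS hf => hapriori f hf₀ δ hδ.le (fun t ht => hpos (hfS ht)) hf
  exact ⟨f, hf₀, fun t ht => hpos (hsub (hfbox ht)), hf⟩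

end Existence

section Uniqueness

lemma strictAntiOn_radialForce (b : ℝ) {α : ℝ} (hα : 0 < α) :
    StrictAntiOn (radialForce b α) (Ioi 0) := by
  intro x hx y _ hxy
  have hx : 0 < x := hx
  have hcentrifugal : α / y ^ 3 < α / x ^ 3 := by gcongr
  have hharmonic : b ^ 2 / 4 * x ≤ b ^ 2 / 4 * y := by gcongr
  unfold radialForce
  linarith

lemma eq_sqrt_of_radialForce_eq_zero {b α r : ℝ} (hb : b ≠ 0) (hr : 0 < r)
    (h : radialForce b α r = 0) : r = √(√(4 / b ^ 2 * α)) := by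
  have hr4 : 4 / b ^ 2 * α = (r ^ 2) ^ 2 := by
    unfold radialForce at h
    field_simp at h ⊢
    linarith
  rw [hr4, Real.sqrt_sq (by positivity), Real.sqrt_sq hr.le]

lemma hasDerivAt_deriv_of_radialForce {a ρ : ℝ → ℝ} {b : ℝ} (ha : ContDiff ℝ 1 a)
    (ha0 : ∀ t, a t ≠ 0) (hb : b ≠ 0) (hρ : ∀ t, 0 < ρ t)
    (hρ' : ∀ t, HasDerivAt (deriv ρ) (radialForce b (a t ^ 2) (ρ t)) t) (t : ℝ) :
    HasDerivAt ρ (deriv ρ t) t := by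
  have hcont (r : ℝ) : Continuous fun t => radialForce b (a t ^ 2) r := by
    have := ha.continuous
    unfold radialForce
    fun_prop
  have hnull : ContDiff ℝ 1 fun t => √(√(4 / b ^ 2 * a t ^ 2)) :=
    ((contDiff_const.mul (ha.pow 2)).sqrt fun t => by have := ha0 t; positivity).sqrt
      fun t => by have := ha0 t; positivity
  have hjump : HasNoJumps ρ := (hasNoJumps_of_hasDerivAt hρ').of_strictAntiOn
    (fun t => strictAntiOn_radialForce b (sq_pos_of_ne_zero (ha0 t))) (fun r _ => hcont r) hρ
  exact hjump.hasDerivAt_deriv hρ' hnull.locallyLipschitz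
    (fun t ht => eq_sqrt_of_radialForce_eq_zero hb (hρ t) ht) t

end Uniqueness

/-- Global existence and uniqueness for the radial equation
`r'' + (b²/4) r = a(t)²/r³`: if `a` is `C¹` on `ℝ` with no zeros, then for any
initial condition `r(t₀) = r₀ > 0`, `r'(t₀) = r₁` there is a unique solution
defined on the whole real line, and it stays positive. -/
theorem global_solution_radial_ode (a : ℝ → ℝ) (ha : ContDiff ℝ 1 a)
    (ha0 : ∀ t, a t ≠ 0) (b : ℝ) (hb : 0 < b)
    (t₀ r₀ r₁ : ℝ) (hr₀ : 0 < r₀) :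
    ∃ r : ℝ → ℝ,
      ((∀ t, 0 < r t) ∧
        (∀ t, HasDerivAt (deriv r) ((a t) ^ 2 / (r t) ^ 3 - b ^ 2 / 4 * r t) t) ∧
        r t₀ = r₀ ∧ deriv r t₀ = r₁) ∧
      ∀ ρ : ℝ → ℝ,
        ((∀ t, 0 < ρ t) ∧
          (∀ t, HasDerivAt (deriv ρ) ((a t) ^ 2 / (ρ t) ^ 3 - b ^ 2 / 4 * ρ t) t) ∧
          ρ t₀ = r₀ ∧ deriv ρ t₀ = r₁) → ρ = r := by
  have hfield (t : ℝ) (x : ℝ × ℝ) (hx : 0 < x.1) :=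
    contDiffAt_uncurry_radialField ha b t hx.ne'
  obtain ⟨f, hf₀, hf⟩ := exists_forall_hasDerivAt_of_forall_ball hfield fun T hT =>
    exists_radialSolution_ball ha ha0 hb.ne' t₀ (x₀ := (r₀, r₁)) hr₀ hT.le
  have hderiv : deriv (fun t => (f t).1) = fun t => (f t).2 :=
    funext fun t => HasDerivAt.deriv (hf t).2.fst
  refine ⟨fun t => (f t).1, ⟨fun t => (hf t).1, ?_, congrArg Prod.fst hf₀, ?_⟩, ?_⟩
  · exact hderiv ▸ fun t => (hf t).2.snd
  · exact hderiv ▸ congrArg Prod.snd hf₀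
  · rintro ρ ⟨hρ, hρ', hρ₀, hρ₁⟩
    have hsol (t : ℝ) :
        HasDerivAt (fun s => (ρ s, deriv ρ s)) (radialField a b t (ρ t, deriv ρ t)) t :=
      (hasDerivAt_deriv_of_radialForce ha ha0 hb.ne' hρ hρ' t).prodMk (hρ' t)
    have heq : EqOn (fun t => (ρ t, deriv ρ t)) f univ :=
      eqOn_of_hasDerivAt_of_contDiffAt isOpen_univ isPreconnected_univ
        (fun t _ => hfield t _ (hρ t)) (fun t _ => hsol t) (fun t _ => (hf t).2) (mem_univ t₀)
        (by rw [hf₀, hρ₀, hρ₁])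
    exact funext fun t => congrArg Prod.fst (heq (mem_univ t))
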